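/- Let q : [0,1] → ℂ be continuous and suppose q is analytic near t = 0; precisely, suppose there exist a > 0, M > 0 and complex numbers (a_k)_{k≥0} with |a_k| ≤ M (2a)^{−k} such that q(t) = Σ_{k=0}^∞ a_k t^k for all t ∈ [0, 2a]. Set q_k := k! a_k. Then there exist constants C, C̃ > 0 such that |q_k| ≤ C̃^{k+1} k^k for all k ≥ 0 (with 0^0 := 1), and |Lq(τ) − Σ_{k=0}^{⌊τ/C⌋} q_k τ^{−(k+1)}| ≤ C̃ e^{−τ/C̃} for all τ ≥ 1. -/

import Mathlib

open MeasureTheory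

/-!
On `[0, b]`, a fixed fraction of the radius of convergence, `q` is its `n`-th Taylor polynomial up
to an error `O(2⁻ⁿ)`; the integral of `exp (-t τ) q t` over the rest of the interval is
`O(exp (-b τ))`. The exact transform of `t ^ k` over `(0, ∞)` is `k! / τ ^ (k + 1)`, and cutting it
off at `b` also costs only `O(b ^ k exp (-b τ))` as long as `2 k ≤ b τ`, because
`t ^ k exp (-t τ / 2)` is then decreasing on `[b, ∞)`. Taking `n` proportional to `τ` makes all
three errors exponentially small.
-/

open Filter Topology

section WatsonLemma

open Set
open scoped Nat

variable {E : Type*} [NormedAddCommGroup E] {q : ℝ → E} {c : ℕ → E} {b T τ M : ℝ} {k n : ℕ}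

lemma nonneg_of_forall_norm_mul_pow_le {r : ℝ} (hM : ∀ k, ‖c k‖ * r ^ k ≤ M) : 0 ≤ M :=
  (norm_nonneg (c 0)).trans (by simpa using hM 0)

variable [NormedSpace ℝ E]

/-- The Laplace transform at `τ` of `q` restricted to `[u, v]`, for real `τ`. -/
noncomputable def laplaceIntegral (q : ℝ → E) (u v τ : ℝ) : E :=
  ∫ t in u..v, Real.exp (-(t * τ)) • q t

/-- The sum of the first `n` terms of the asymptotic expansion as `τ → ∞` that Watson's lemma
attaches to the Taylor series `∑ t ^ k • c k`. -/
noncomputable def watsonSum (c : ℕ → E) (n : ℕ) (τ : ℝ) : E :=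
  ∑ k ∈ Finset.range n, (k ! / τ ^ (k + 1)) • c k

lemma one_half_pow_le_exp_neg_half (n : ℕ) : (1 / 2 : ℝ) ^ n ≤ Real.exp (-(n / 2)) := by
  calc (1 / 2 : ℝ) ^ n ≤ Real.exp (-(1 / 2)) ^ n := by
        gcongr
        linarith [Real.one_sub_le_exp_neg (1 / 2)]
    _ = Real.exp (-(n / 2)) := by
        rw [← Real.exp_nat_mul]
        ring_nf

lemma pow_le_pow_mul_exp_mul_sub {t σ : ℝ} (hb : 0 < b) (hk : k ≤ b * σ) (hbt : b ≤ t) :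
    t ^ k ≤ b ^ k * Real.exp (σ * (t - b)) := by
  have ratio_le : t / b ≤ Real.exp (t / b - 1) := by
    linarith [Real.add_one_le_exp (t / b - 1)]
  have exponent_le : k * (t / b - 1) ≤ σ * (t - b) := by
    have : 0 ≤ t / b - 1 := sub_nonneg.2 ((one_le_div hb).2 hbt)
    calc k * (t / b - 1) ≤ b * σ * (t / b - 1) := by gcongr
      _ = σ * (t - b) := by field_simp
  have : 0 < t := hb.trans_le hbt
  calc t ^ k = b ^ k * (t / b) ^ k := by rw [← mul_pow, mul_div_cancel₀ t hb.ne']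
    _ ≤ b ^ k * Real.exp (t / b - 1) ^ k := by gcongr
    _ = b ^ k * Real.exp (k * (t / b - 1)) := by rw [Real.exp_nat_mul]
    _ ≤ b ^ k * Real.exp (σ * (t - b)) := by gcongr

lemma exp_neg_mul_mul_pow_le {t : ℝ} (hb : 0 < b) (hk : 2 * k ≤ b * τ) (hbt : b ≤ t) :
    Real.exp (-(t * τ)) * t ^ k ≤
      b ^ k * Real.exp (-(b * τ) / 2) * Real.exp (-(τ / 2) * t) := by
  calc Real.exp (-(t * τ)) * t ^ k
      ≤ Real.exp (-(t * τ)) * (b ^ k * Real.exp (τ / 2 * (t - b))) := by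
        gcongr
        exact pow_le_pow_mul_exp_mul_sub hb (by linarith) hbt
    _ = b ^ k * Real.exp (-(b * τ) / 2) * Real.exp (-(τ / 2) * t) := by
        rw [mul_left_comm, mul_assoc, ← Real.exp_add, ← Real.exp_add]
        ring_nf

lemma integrableOn_exp_neg_mul_mul_pow_Ioi (k : ℕ) (hτ : 0 < τ) :
    IntegrableOn (fun t : ℝ ↦ Real.exp (-(t * τ)) * t ^ k) (Ioi 0) := by
  have h := integrableOn_rpow_mul_exp_neg_mul_rpow (s := k) (by linarith [k.cast_nonneg (α := ℝ)])
    one_pos hτ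
  simpa [mul_comm] using h

lemma integral_exp_neg_mul_mul_pow_Ioi (k : ℕ) (hτ : 0 < τ) :
    ∫ t in Ioi (0 : ℝ), Real.exp (-(t * τ)) * t ^ k = k ! / τ ^ (k + 1) := by
  have h := Real.integral_rpow_mul_exp_neg_mul_Ioi (a := k + 1) (by positivity) hτ
  rw [Real.Gamma_nat_eq_factorial, ← Nat.cast_add_one, Real.rpow_natCast, one_div_pow,
    one_div_mul_eq_div] at h
  simpa [mul_comm] using h

lemma abs_integral_exp_neg_mul_mul_pow_sub_le (hb : 0 < b) (hτ : 0 < τ) (hk : 2 * k ≤ b * τ) :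
    |(∫ t in (0 : ℝ)..b, Real.exp (-(t * τ)) * t ^ k) - k ! / τ ^ (k + 1)| ≤
      2 / τ * b ^ k * Real.exp (-(b * τ)) := by
  have integrable := integrableOn_exp_neg_mul_mul_pow_Ioi k hτ
  have integrable_tail := integrable.mono_set (Ioi_subset_Ioi hb.le)
  have split := intervalIntegral.integral_interval_add_Ioi integrable integrable_tail
  have tail_nonneg : 0 ≤ ∫ t in Ioi b, Real.exp (-(t * τ)) * t ^ k := by
    refine setIntegral_nonneg measurableSet_Ioi fun t ht ↦ ?_
    have : 0 < t := hb.trans ht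
    positivity
  rw [← integral_exp_neg_mul_mul_pow_Ioi k hτ, ← split, sub_add_cancel_left, abs_neg,
    abs_of_nonneg tail_nonneg]
  calc ∫ t in Ioi b, Real.exp (-(t * τ)) * t ^ k
      ≤ ∫ t in Ioi b, b ^ k * Real.exp (-(b * τ) / 2) * Real.exp (-(τ / 2) * t) :=
        setIntegral_mono_on integrable_tail
          ((integrableOn_exp_mul_Ioi (by linarith) b).const_mul _) measurableSet_Ioi
          fun t ht ↦ exp_neg_mul_mul_pow_le hb hk (le_of_lt ht)
    _ = 2 / τ * b ^ k * (Real.exp (-(b * τ) / 2) * Real.exp (-(b * τ) / 2)) := by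
        rw [integral_const_mul, integral_exp_mul_Ioi (by linarith),
          show -(τ / 2) * b = -(b * τ) / 2 by ring]
        field_simp
    _ = 2 / τ * b ^ k * Real.exp (-(b * τ)) := by rw [← Real.exp_add, add_halves]

lemma intervalIntegrable_exp_neg_mul_smul {u v : ℝ} (hq : IntervalIntegrable q volume u v)
    (τ : ℝ) :
    IntervalIntegrable (fun t ↦ Real.exp (-(t * τ)) • q t) volume u v :=
  hq.continuousOn_smul (by fun_prop)

lemma norm_laplaceIntegral_le_exp_mul_integral_norm {u v : ℝ} (huv : u ≤ v) (hτ : 0 ≤ τ)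
    (hq : IntervalIntegrable q volume u v) :
    ‖laplaceIntegral q u v τ‖ ≤ Real.exp (-(u * τ)) * ∫ t in u..v, ‖q t‖ := by
  rw [← intervalIntegral.integral_const_mul]
  refine intervalIntegral.norm_integral_le_of_norm_le huv (ae_of_all _ fun t ht ↦ ?_)
    (hq.norm.const_mul _)
  rw [norm_smul, Real.norm_of_nonneg (Real.exp_nonneg _)]
  gcongr
  exact ht.1.le

lemma norm_sub_sum_range_pow_smul_le {t : ℝ} {x : E} (hM : ∀ k, ‖c k‖ * (2 * b) ^ k ≤ M)
    (ht : |t| ≤ b) (hsum : HasSum (fun k ↦ t ^ k • c k) x) (n : ℕ) :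
    ‖x - ∑ k ∈ Finset.range n, t ^ k • c k‖ ≤ 2 * M * (1 / 2) ^ n := by
  have geometric_bound (k : ℕ) : ‖t ^ k • c k‖ ≤ M * (1 / 2) ^ k := by
    calc ‖t ^ k • c k‖ = |t| ^ k * ‖c k‖ := by rw [norm_smul, norm_pow, Real.norm_eq_abs]
      _ ≤ b ^ k * ‖c k‖ := by gcongr
      _ = ‖c k‖ * (2 * b) ^ k * (1 / 2) ^ k := by
          rw [mul_assoc, ← mul_pow, mul_comm]
          ring_nf
      _ ≤ M * (1 / 2) ^ k := by
          gcongr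
          exact hM k
  rw [norm_sub_rev]
  refine (norm_sub_le_of_geometric_bound_of_hasSum (by norm_num) geometric_bound hsum n).trans_eq ?_
  ring

lemma norm_laplaceIntegral_sub_sum_range_le (hb : 0 ≤ b) (hτ : 0 ≤ τ)
    (hM : ∀ k, ‖c k‖ * (2 * b) ^ k ≤ M)
    (hsum : ∀ t ∈ Ioc 0 b, HasSum (fun k ↦ t ^ k • c k) (q t)) (n : ℕ) :
    ‖laplaceIntegral (fun t ↦ q t - ∑ k ∈ Finset.range n, t ^ k • c k) 0 b τ‖ ≤
      2 * b * M * (1 / 2) ^ n := by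
  have pointwise : ∀ t ∈ uIoc 0 b,
      ‖Real.exp (-(t * τ)) • (q t - ∑ k ∈ Finset.range n, t ^ k • c k)‖ ≤
        2 * M * (1 / 2) ^ n := by
    intro t ht
    rw [uIoc_of_le hb] at ht
    rw [norm_smul, Real.norm_of_nonneg (Real.exp_nonneg _)]
    have exp_le_one : Real.exp (-(t * τ)) ≤ 1 :=
      Real.exp_le_one_iff.2 (neg_nonpos.2 (mul_nonneg ht.1.le hτ))
    exact (mul_le_of_le_one_left (norm_nonneg _) exp_le_one).trans
      (norm_sub_sum_range_pow_smul_le hM ((abs_of_pos ht.1).trans_le ht.2) (hsum t ht) n)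
  calc _ ≤ 2 * M * (1 / 2) ^ n * |b - 0| :=
        intervalIntegral.norm_integral_le_of_norm_le_const pointwise
    _ = 2 * b * M * (1 / 2) ^ n := by
        rw [sub_zero, abs_of_nonneg hb]
        ring

lemma laplaceIntegral_sum_range_pow_smul [CompleteSpace E] (c : ℕ → E) (n : ℕ) (u v τ : ℝ) :
    laplaceIntegral (fun t ↦ ∑ k ∈ Finset.range n, t ^ k • c k) u v τ =
      ∑ k ∈ Finset.range n, (∫ t in u..v, Real.exp (-(t * τ)) * t ^ k) • c k := by
  simp only [laplaceIntegral, Finset.smul_sum, smul_smul]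
  rw [intervalIntegral.integral_finsetSum fun k _ ↦ Continuous.intervalIntegrable (by fun_prop) u v]
  simp only [intervalIntegral.integral_smul_const]

lemma norm_laplaceIntegral_sum_range_sub_watsonSum_le [CompleteSpace E] (hb : 0 < b) (hτ : 0 < τ)
    (hM : ∀ k, ‖c k‖ * (2 * b) ^ k ≤ M) (hn : ∀ k < n, 2 * k ≤ b * τ) :
    ‖laplaceIntegral (fun t ↦ ∑ k ∈ Finset.range n, t ^ k • c k) 0 b τ - watsonSum c n τ‖ ≤
      4 * M / τ * Real.exp (-(b * τ)) := by
  have hM0 : 0 ≤ M := nonneg_of_forall_norm_mul_pow_le hM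
  have term_bound : ∀ k ∈ Finset.range n,
      ‖((∫ t in (0 : ℝ)..b, Real.exp (-(t * τ)) * t ^ k) - k ! / τ ^ (k + 1)) • c k‖ ≤
        2 * M / τ * Real.exp (-(b * τ)) * (1 / 2) ^ k := by
    intro k hk
    rw [norm_smul, Real.norm_eq_abs]
    calc _ ≤ 2 / τ * b ^ k * Real.exp (-(b * τ)) * ‖c k‖ := by
          gcongr
          exact abs_integral_exp_neg_mul_mul_pow_sub_le hb hτ (hn k (Finset.mem_range.1 hk))
      _ = 2 / τ * Real.exp (-(b * τ)) * (1 / 2) ^ k * (‖c k‖ * (2 * b) ^ k) := by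
          rw [mul_pow, one_div_pow]
          field_simp
      _ ≤ 2 / τ * Real.exp (-(b * τ)) * (1 / 2) ^ k * M := by
          gcongr
          exact hM k
      _ = 2 * M / τ * Real.exp (-(b * τ)) * (1 / 2) ^ k := by ring
  rw [laplaceIntegral_sum_range_pow_smul, watsonSum, ← Finset.sum_sub_distrib]
  simp only [← sub_smul]
  calc _ ≤ 2 * M / τ * Real.exp (-(b * τ)) * ∑ k ∈ Finset.range n, (1 / 2 : ℝ) ^ k := by
        rw [Finset.mul_sum]
        exact norm_sum_le_of_le _ term_bound
    _ ≤ 2 * M / τ * Real.exp (-(b * τ)) * 2 := by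
        gcongr
        exact sum_geometric_two_le n
    _ = 4 * M / τ * Real.exp (-(b * τ)) := by ring

lemma laplaceIntegral_eq_tail_add_sub_add {u v : ℝ} {p : ℝ → E}
    (hq₁ : IntervalIntegrable q volume u b) (hq₂ : IntervalIntegrable q volume b v)
    (hp : IntervalIntegrable p volume u b) :
    laplaceIntegral q u v τ =
      laplaceIntegral q b v τ + laplaceIntegral (fun t ↦ q t - p t) u b τ +
        laplaceIntegral p u b τ := by
  have hq₁' := intervalIntegrable_exp_neg_mul_smul hq₁ τ
  have hp' := intervalIntegrable_exp_neg_mul_smul hp τ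
  simp only [laplaceIntegral, smul_sub]
  rw [intervalIntegral.integral_sub hq₁' hp',
    ← intervalIntegral.integral_add_adjacent_intervals hq₁'
      (intervalIntegrable_exp_neg_mul_smul hq₂ τ)]
  abel

theorem norm_laplaceIntegral_sub_watsonSum_le [CompleteSpace E] (hb : 0 < b) (hbT : b ≤ T)
    (hq : IntervalIntegrable q volume 0 T) (hM : ∀ k, ‖c k‖ * (2 * b) ^ k ≤ M)
    (hsum : ∀ t ∈ Ioc 0 b, HasSum (fun k ↦ t ^ k • c k) (q t)) (hτ : 0 < τ)
    (hn : ∀ k < n, 2 * k ≤ b * τ) :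
    ‖laplaceIntegral q 0 T τ - watsonSum c n τ‖ ≤
      ((∫ t in b..T, ‖q t‖) + 4 * M / τ) * Real.exp (-(b * τ)) + 2 * b * M * (1 / 2) ^ n := by
  have hq₁ : IntervalIntegrable q volume 0 b :=
    hq.mono_set (uIcc_subset_uIcc_left (mem_uIcc_of_le hb.le hbT))
  have hq₂ : IntervalIntegrable q volume b T :=
    hq.mono_set (uIcc_subset_uIcc_right (mem_uIcc_of_le hb.le hbT))
  have hp : IntervalIntegrable (fun t ↦ ∑ k ∈ Finset.range n, t ^ k • c k) volume 0 b :=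
    Continuous.intervalIntegrable (by fun_prop) 0 b
  rw [laplaceIntegral_eq_tail_add_sub_add hq₁ hq₂ hp, add_sub_assoc]
  have far := norm_laplaceIntegral_le_exp_mul_integral_norm hbT hτ.le hq₂
  have remainder := norm_laplaceIntegral_sub_sum_range_le hb.le hτ.le hM hsum n
  have polynomial := norm_laplaceIntegral_sum_range_sub_watsonSum_le hb hτ hM hn
  linarith [norm_add₃_le.trans (add_le_add (add_le_add far remainder) polynomial)]

theorem norm_laplaceIntegral_sub_watsonSum_floor_le [CompleteSpace E] (hb : 0 < b) (hbT : b ≤ T)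
    (hq : IntervalIntegrable q volume 0 T) (hM : ∀ k, ‖c k‖ * (2 * b) ^ k ≤ M)
    (hsum : ∀ t ∈ Ioc 0 b, HasSum (fun k ↦ t ^ k • c k) (q t)) (hτ : 1 ≤ τ) :
    ‖laplaceIntegral q 0 T τ - watsonSum c (⌊τ / (2 / b)⌋₊ + 1) τ‖ ≤
      ((∫ t in b..T, ‖q t‖) + 4 * M + 2 * b * M) * Real.exp (-τ / (4 / b)) := by
  have hM0 : 0 ≤ M := nonneg_of_forall_norm_mul_pow_le hM
  have hτ0 : 0 < τ := one_pos.trans_le hτ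
  have hbτ : 0 < b * τ := mul_pos hb hτ0
  have floor_arg : τ / (2 / b) = b * τ / 2 := by field_simp
  have exp_arg : -τ / (4 / b) = -(b * τ) / 4 := by field_simp
  have integral_nonneg : 0 ≤ ∫ t in b..T, ‖q t‖ :=
    intervalIntegral.integral_nonneg hbT fun t _ ↦ norm_nonneg (q t)
  rw [floor_arg, exp_arg]
  set n := ⌊b * τ / 2⌋₊ + 1
  have two_mul_le : ∀ k < n, 2 * (k : ℝ) ≤ b * τ := fun k hk ↦ by
    linarith [(Nat.le_floor_iff (by positivity)).1 (Nat.lt_succ_iff.1 hk)]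
  have one_half_pow_le : (1 / 2 : ℝ) ^ n ≤ Real.exp (-(b * τ) / 4) := by
    have : b * τ / 2 < n := by exact_mod_cast Nat.lt_floor_add_one (b * τ / 2)
    exact (one_half_pow_le_exp_neg_half n).trans (Real.exp_le_exp.2 (by linarith))
  calc _ ≤ ((∫ t in b..T, ‖q t‖) + 4 * M / τ) * Real.exp (-(b * τ)) + 2 * b * M * (1 / 2) ^ n :=
        norm_laplaceIntegral_sub_watsonSum_le hb hbT hq hM hsum hτ0 two_mul_le
    _ ≤ ((∫ t in b..T, ‖q t‖) + 4 * M) * Real.exp (-(b * τ) / 4) +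
          2 * b * M * Real.exp (-(b * τ) / 4) := by
        gcongr
        · exact div_le_self (by positivity) hτ
        · linarith
    _ = _ := by ring

lemma norm_factorial_smul_le {r A : ℝ} (hr : 0 < r) (hM : ∀ k, ‖c k‖ * r ^ k ≤ M)
    (hMA : M ≤ A) (hbA : 1 / r ≤ A) (k : ℕ) :
    ‖(k ! : ℝ) • c k‖ ≤ A ^ (k + 1) * (k : ℝ) ^ k := by
  have hA : 0 ≤ A := le_trans (by positivity) hbA
  have coeff_bound : ‖c k‖ ≤ A * A ^ k :=
    calc ‖c k‖ = ‖c k‖ * r ^ k * (1 / r) ^ k := by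
          rw [mul_assoc, ← mul_pow, mul_one_div_cancel hr.ne', one_pow, mul_one]
      _ ≤ A * A ^ k := by
          gcongr
          exact (hM k).trans hMA
  calc ‖(k ! : ℝ) • c k‖ = k ! * ‖c k‖ := by rw [norm_smul, Real.norm_natCast]
    _ ≤ (k : ℝ) ^ k * (A * A ^ k) := by
        gcongr
        exact_mod_cast k.factorial_le_pow
    _ = A ^ (k + 1) * (k : ℝ) ^ k := by ring

lemma exists_norm_mul_pow_le_of_summable {r : ℝ} (hr : 0 ≤ r)
    (h : Summable fun k ↦ r ^ k • c k) : ∃ M, ∀ k, ‖c k‖ * r ^ k ≤ M := by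
  obtain ⟨M, hM⟩ := h.tendsto_atTop_zero.norm.bddAbove_range
  refine ⟨M, fun k ↦ ?_⟩
  simpa [norm_smul, abs_of_nonneg hr, mul_comm] using hM (mem_range_self k)

lemma exists_radius_of_eventually_hasSum (hT : 0 < T)
    (hsum : ∀ᶠ t in 𝓝[>] 0, HasSum (fun k ↦ t ^ k • c k) (q t)) :
    ∃ b > 0, b ≤ T ∧ (∃ M, ∀ k, ‖c k‖ * (2 * b) ^ k ≤ M) ∧
      ∀ t ∈ Ioc 0 b, HasSum (fun k ↦ t ^ k • c k) (q t) := by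
  obtain ⟨δ, hδ, hsub⟩ := mem_nhdsGT_iff_exists_Ioc_subset.1 hsum
  have hδ0 : 0 < δ := hδ
  have hb : 0 < min (δ / 2) T := by positivity
  have h2b : 2 * min (δ / 2) T ≤ δ := by linarith [min_le_left (δ / 2) T]
  refine ⟨_, hb, min_le_right _ _, ?_, fun t ht ↦ hsub ⟨ht.1, by linarith [ht.2]⟩⟩
  exact exists_norm_mul_pow_le_of_summable (by positivity)
    (hsub ⟨by positivity, h2b⟩ : HasSum _ _).summable

theorem stmt_1_general [CompleteSpace E] (hT : 0 < T) (hq : IntervalIntegrable q volume 0 T)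
    (hsum : ∀ᶠ t in 𝓝[>] 0, HasSum (fun k ↦ t ^ k • c k) (q t)) :
    ∃ C > (0 : ℝ), ∃ A > (0 : ℝ),
      (∀ k : ℕ, ‖(k ! : ℝ) • c k‖ ≤ A ^ (k + 1) * (k : ℝ) ^ k) ∧
      ∀ τ : ℝ, 1 ≤ τ →
        ‖laplaceIntegral q 0 T τ - watsonSum c (⌊τ / C⌋₊ + 1) τ‖ ≤ A * Real.exp (-τ / A) := by
  obtain ⟨b, hb, hbT, ⟨M, hM⟩, hsum⟩ := exists_radius_of_eventually_hasSum hT hsum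
  have hM0 : 0 ≤ M := nonneg_of_forall_norm_mul_pow_le hM
  have integral_nonneg : 0 ≤ ∫ t in b..T, ‖q t‖ :=
    intervalIntegral.integral_nonneg hbT fun t _ ↦ norm_nonneg (q t)
  have hbM : 0 ≤ 2 * b * M := by positivity
  have h4b : 0 < 4 / b := by positivity
  set K := (∫ t in b..T, ‖q t‖) + 4 * M + 2 * b * M
  refine ⟨2 / b, by positivity, K + 4 / b, by positivity, ?_, fun τ hτ ↦ ?_⟩
  · refine norm_factorial_smul_le (mul_pos two_pos hb) hM (by linarith) ?_
    calc 1 / (2 * b) ≤ 4 / b := by gcongr <;> linarith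
      _ ≤ K + 4 / b := by linarith
  · refine (norm_laplaceIntegral_sub_watsonSum_floor_le hb hbT hq hM hsum hτ).trans ?_
    have hKA : 4 / b ≤ K + 4 / b := by linarith
    rw [neg_div, neg_div]
    gcongr ?_ * Real.exp (-(τ / ?_))
    linarith

end WatsonLemma

/-- If `q : [0,1] → ℂ` is continuous and analytic near `t = 0`, i.e.
`q(t) = ∑ a_k t^k` on `[0, 2a]` with `|a_k| ≤ M (2a)^{-k}`, then with `q_k := k! a_k`
there are constants `C, C̃ > 0` such that `|q_k| ≤ C̃^{k+1} k^k` and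
`|Lq(τ) - ∑_{k=0}^{⌊τ/C⌋} q_k τ^{-(k+1)}| ≤ C̃ e^{-τ/C̃}` for all `τ ≥ 1`. -/
theorem stmt_1 (q : ℝ → ℂ) (hq : ContinuousOn q (Set.Icc 0 1))
    (a M : ℝ) (ha : 0 < a) (hM : 0 < M) (ak : ℕ → ℂ)
    (hak : ∀ k : ℕ, ‖ak k‖ ≤ M * (2 * a) ^ (-(k : ℤ)))
    (hsum : ∀ t ∈ Set.Icc (0:ℝ) (2 * a),
      HasSum (fun k : ℕ => ak k * (t : ℂ) ^ k) (q t)) :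
    ∃ C > (0:ℝ), ∃ Ct > (0:ℝ),
      (∀ k : ℕ, ‖(k.factorial : ℂ) * ak k‖ ≤ Ct ^ (k + 1) * (k : ℝ) ^ k) ∧
      ∀ τ : ℝ, 1 ≤ τ →
        ‖(∫ t in (0:ℝ)..1, Complex.exp (-((t : ℂ) * (τ : ℂ))) * q t) -
            ∑ k ∈ Finset.range (⌊τ / C⌋₊ + 1),
              ((k.factorial : ℂ) * ak k) * (τ : ℂ) ^ (-((k : ℤ) + 1))‖
          ≤ Ct * Real.exp (-τ / Ct) := by
  have analytic : ∀ᶠ t in 𝓝[>] (0 : ℝ), HasSum (fun k ↦ t ^ k • ak k) (q t) := by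
    filter_upwards [Ioc_mem_nhdsGT (show 0 < 2 * a by positivity)] with t ht
    simpa [mul_comm] using hsum t (Set.Ioc_subset_Icc_self ht)
  have zpow_neg_add_one (z : ℂ) (k : ℕ) : z ^ (-((k : ℤ) + 1)) = (z ^ (k + 1))⁻¹ := by
    rw [← Int.negSucc_eq, zpow_negSucc]
  simpa [laplaceIntegral, watsonSum, zpow_neg_add_one, div_eq_mul_inv, mul_right_comm,
    -neg_add_rev] using
    stmt_1_general one_pos (hq.intervalIntegrable_of_Icc zero_le_one) analytic
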